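/- arXiv:2112.00472 — 2 statements merged into one kernel-verified Lean document; each statement's English description precedes it below -/
import Mathlib

section
/- Let p be an odd prime and let D be a squarefree positive integer with D ≡ 3 (mod 4). Let X, Y be integers with X² − 4Y^p = −D, Y > 0, and D + 1 > 4Y. Then the ideal class group of K = ℚ(√−D) contains an element of order p. -/
/-!
Put `d = -D`. The element `θ = (X + √d) / 2` is an algebraic integer of norm `Y ^ p`, and since
squarefreeness of `D` makes `X` and `Y` coprime, `θ` is coprime to its conjugate `X - θ`. Hence
`(θ) = I ^ p` with `I` of norm `Y`, so the class of `I` has order dividing `p`.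

An algebraic integer `(a + b√d) / 2` has norm `(a² + D b²) / 4`, so a generator of an ideal whose
norm is less than `(D + 1) / 4` is a rational integer `c`. If the ideal contains `θ`, then `c ∣ θ`,
and the coefficient `1 / 2` of `√d` in `θ` forces `c = ±1`. Thus `I` itself is not principal.

The same argument applies to every power `I ^ m` of norm less than `(D + 1) / 4`, which gives
classes of composite order as well.
-/

open NumberField

theorem not_four_dvd_of_squarefree {d : ℤ} (hd : Squarefree d) : ¬4 ∣ d := fun h =>
  absurd (Int.isUnit_iff.mp (hd 2 h)) (by decide)

theorem isCoprime_of_squarefree_sq_sub_mul_pow {x y k d : ℤ} {n : ℕ} (hn : 1 < n)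
    (hd : Squarefree d) (h : x ^ 2 - k * y ^ n = d) : IsCoprime x y := by
  rw [← gcd_isUnit_iff]
  refine hd (gcd x y) ?_
  have hx : gcd x y ^ 2 ∣ x ^ 2 := pow_dvd_pow_of_dvd (gcd_dvd_left x y) 2
  have hy : gcd x y ^ 2 ∣ y ^ n :=
    (pow_dvd_pow_of_dvd (gcd_dvd_right x y) 2).trans (pow_dvd_pow y hn)
  rw [← sq, ← h]
  exact hx.sub (hy.mul_left k)

theorem ne_one_of_squarefree_sq_sub_four_mul_pow {x y d : ℤ} {n : ℕ} (hd : Squarefree d)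
    (h : x ^ 2 - 4 * y ^ n = d) (hle : 4 * y ≤ -d) : y ≠ 1 := by
  rintro rfl
  rw [one_pow] at h
  have hd_eq : d = 4 * -1 := by nlinarith [sq_nonneg x]
  exact not_four_dvd_of_squarefree hd ⟨-1, hd_eq⟩

theorem isCoprime_of_isCoprime_add_mul {R : Type*} [CommRing R] {a b : R}
    (h : IsCoprime (a + b) (a * b)) : IsCoprime a b := by
  obtain ⟨u, v, huv⟩ := h
  exact ⟨u + v * b, u, by linear_combination huv⟩

theorem isIntegral_of_squarefree_mul_sq {R F : Type*} [CommRing R] [IsDomain R]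
    [UniqueFactorizationMonoid R] [Field F] [Algebra R F] [IsFractionRing R F] {d : R}
    (hd : Squarefree d) {q : F} (h : IsIntegral R (algebraMap R F d * q ^ 2)) :
    IsIntegral R q := by
  obtain ⟨m, hm⟩ := IsIntegrallyClosed.isIntegral_iff.mp h
  let x : R := IsFractionRing.num R q
  let y : R := (IsFractionRing.den R q : R)
  have hq : q * algebraMap R F y = algebraMap R F x :=
    IsFractionRing.num_mul_den_eq_num_iff_eq'.mpr rfl
  have hxy : d * x ^ 2 = y ^ 2 * m := by
    apply IsFractionRing.injective R F
    simp only [map_mul, map_pow, hm, ← hq]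
    ring
  have hdvd : y ^ 2 ∣ d :=
    (IsFractionRing.num_den_reduced R q).symm.pow.dvd_of_dvd_mul_right ⟨m, hxy⟩
  have hy : IsUnit y := hd y (sq y ▸ hdvd)
  obtain ⟨n, hn⟩ := IsFractionRing.isInteger_of_isUnit_den hy
  exact hn ▸ isIntegral_algebraMap

theorem not_isSquare_intCast_of_neg {F : Type*} [Field F] [LinearOrder F] [IsStrictOrderedRing F]
    {d : ℤ} (hd : d < 0) : ¬IsSquare (d : F) := fun h =>
  (Int.cast_lt_zero.mpr hd).not_ge h.nonneg

theorem orderOf_classGroup_mk0_eq {R : Type*} [CommRing R] [IsDedekindDomain R]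
    {I : nonZeroDivisors (Ideal R)} {n : ℕ} (hn : n ≠ 0) (hI : ((I : Ideal R) ^ n).IsPrincipal)
    (hmin : ∀ m, m ∣ n → m < n → ¬((I : Ideal R) ^ m).IsPrincipal) :
    orderOf (ClassGroup.mk0 I) = n := by
  have pow_eq_one_iff (m : ℕ) : ClassGroup.mk0 I ^ m = 1 ↔ ((I : Ideal R) ^ m).IsPrincipal := by
    rw [← map_pow]
    exact ClassGroup.mk0_eq_one_iff (I ^ m).2
  have hdvd : orderOf (ClassGroup.mk0 I) ∣ n :=
    orderOf_dvd_of_pow_eq_one ((pow_eq_one_iff n).mpr hI)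
  refine (Nat.le_of_dvd (Nat.pos_of_ne_zero hn) hdvd).eq_of_not_lt fun hlt => hmin _ hdvd hlt ?_
  exact (pow_eq_one_iff _).mp (pow_orderOf_eq_one _)

section QuadraticAlgebra

open QuadraticAlgebra

theorem algebraNorm_eq_quadraticAlgebraNorm {R : Type*} [CommRing R] {a b : R}
    (z : QuadraticAlgebra R a b) : Algebra.norm R z = z.norm :=
  det_toLinearMap_eq_norm z

variable {F : Type*} [Field F]

/-- The isomorphism `F[√d] ≃ K` sending `ω` to `α`, where `α` generates `K` over `F` and is a
square root of the nonsquare `d`. It gives elements of `K` coordinates with respect to `1, α`. -/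
noncomputable def quadraticAlgebraEquivOfSqEq {K : Type*} [CommRing K] [Nontrivial K] [Algebra F K]
    {d : F} {α : K} (hd : ¬IsSquare d) (hα : α ^ 2 = algebraMap F K d)
    (hgen : Algebra.adjoin F {α} = ⊤) : QuadraticAlgebra F d 0 ≃ₐ[F] K :=
  haveI : Fact (∀ r : F, r ^ 2 ≠ d + 0 * r) := ⟨fun r hr => hd ⟨r, by linear_combination -hr⟩⟩
  let f : QuadraticAlgebra F d 0 →ₐ[F] K :=
    lift ⟨α, by rw [← sq, hα, zero_smul, add_zero, Algebra.algebraMap_eq_smul_one]⟩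
  AlgEquiv.ofBijective f ⟨f.toRingHom.injective, by
    have hαf : α ∈ f.range := ⟨ω, by simp [f]⟩
    rw [← AlgHom.range_eq_top, eq_top_iff, ← hgen]
    exact Algebra.adjoin_le (Set.singleton_subset_iff.mpr hαf)⟩

section IsIntegral

variable {R : Type*} [CommRing R] [Algebra R F] {a b : F} {z : QuadraticAlgebra F a b}

theorem isIntegral_quadraticAlgebra_star (hz : IsIntegral R z) : IsIntegral R (star z) :=
  hz.map (AlgHom.mk (starRingEnd (QuadraticAlgebra F a b)) fun r => by
    change star _ = _
    rw [IsScalarTower.algebraMap_apply R F]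
    ext <;> simp)

theorem isIntegral_quadraticAlgebra_trace (hz : IsIntegral R z) : IsIntegral R z.trace := by
  rw [← isIntegral_algebraMap_iff (algebraMap_injective (a := a) (b := b)),
    algebraMap_trace_eq_add_star]
  exact hz.add (isIntegral_quadraticAlgebra_star hz)

theorem isIntegral_quadraticAlgebra_norm (hz : IsIntegral R z) : IsIntegral R z.norm := by
  rw [← isIntegral_algebraMap_iff (algebraMap_injective (a := a) (b := b)),
    algebraMap_norm_eq_mul_star]
  exact hz.mul (isIntegral_quadraticAlgebra_star hz)

theorem isIntegral_two_mul_im_of_squarefree [IsDomain R] [UniqueFactorizationMonoid R]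
    [IsFractionRing R F] {d : R} (hd : Squarefree d)
    {z : QuadraticAlgebra F (algebraMap R F d) 0} (hz : IsIntegral R z) :
    IsIntegral R (2 * z.im) := by
  refine isIntegral_of_squarefree_mul_sq hd ?_
  have h : algebraMap R F d * (2 * z.im) ^ 2 = z.trace ^ 2 - (4 : ℕ) • z.norm := by
    rw [trace_def, norm_def, nsmul_eq_mul]
    push_cast
    ring
  rw [h]
  exact ((isIntegral_quadraticAlgebra_trace hz).pow 2).sub
    ((isIntegral_quadraticAlgebra_norm hz).nsmul 4)

end IsIntegral

theorem exists_eq_mk_half_of_isIntegral {d : ℤ} (hd : Squarefree d)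
    {z : QuadraticAlgebra ℚ (d : ℚ) 0} (hz : IsIntegral ℤ z) :
    ∃ a b : ℤ, z = ⟨a / 2, b / 2⟩ := by
  obtain ⟨a, ha⟩ := IsIntegrallyClosed.isIntegral_iff.mp (isIntegral_quadraticAlgebra_trace hz)
  obtain ⟨b, hb⟩ := IsIntegrallyClosed.isIntegral_iff.mp (isIntegral_two_mul_im_of_squarefree hd hz)
  simp only [algebraMap_int_eq, eq_intCast, trace_def, zero_mul, add_zero] at ha hb
  exact ⟨a, b, by ext <;> simp [ha, hb]⟩

end QuadraticAlgebra

section QuadraticField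

open QuadraticAlgebra (norm_def)

variable {K : Type*} [Field K] [NumberField K] {d : ℤ} (e : QuadraticAlgebra ℚ (d : ℚ) 0 ≃ₐ[ℚ] K)

theorem coe_norm_int_eq_quadraticAlgebraNorm (z : 𝓞 K) :
    (Algebra.norm ℤ z : ℚ) = (e.symm z).norm := by
  rw [Algebra.coe_norm_int, ← Algebra.norm_eq_of_algEquiv e.symm,
    algebraNorm_eq_quadraticAlgebraNorm]

theorem exists_symm_eq_mk_half (hd : Squarefree d) (z : 𝓞 K) :
    ∃ a b : ℤ, e.symm z = ⟨a / 2, b / 2⟩ :=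
  exists_eq_mk_half_of_isIntegral hd
    ((RingOfIntegers.isIntegral_coe z).map (e.symm.restrictScalars ℤ))

theorem four_mul_norm_eq_of_symm_eq_mk_half {z : 𝓞 K} {a b : ℤ}
    (hz : e.symm z = ⟨a / 2, b / 2⟩) : 4 * Algebra.norm ℤ z = a ^ 2 - d * b ^ 2 := by
  have hnorm := coe_norm_int_eq_quadraticAlgebraNorm e z
  rw [hz, norm_def] at hnorm
  have : (4 * Algebra.norm ℤ z : ℚ) = a ^ 2 - d * b ^ 2 := by
    rw [hnorm]
    ring
  exact_mod_cast this

theorem exists_eq_intCast_of_four_mul_norm_le (e : QuadraticAlgebra ℚ (d : ℚ) 0 ≃ₐ[ℚ] K)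
    (hd : Squarefree d) (hneg : d < 0) {z : 𝓞 K} (hz : 4 * Algebra.norm ℤ z ≤ -d) :
    ∃ c : ℤ, z = c := by
  obtain ⟨a, b, hab⟩ := exists_symm_eq_mk_half e hd z
  have hnorm := four_mul_norm_eq_of_symm_eq_mk_half e hab
  have hb : b = 0 := by
    by_contra hb
    have hb_sq : 0 < b ^ 2 := by positivity
    have hd_eq : d = 4 * -Algebra.norm ℤ z := by nlinarith [sq_nonneg a]
    exact not_four_dvd_of_squarefree hd ⟨_, hd_eq⟩
  subst hb
  obtain ⟨c, rfl⟩ : Even a := by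
    have : Even (a ^ 2) := ⟨2 * Algebra.norm ℤ z, by linarith⟩
    exact (Int.even_pow.mp this).1
  refine ⟨c, RingOfIntegers.ext (e.symm.injective ?_)⟩
  rw [hab]
  ext <;> simp

theorem isUnit_of_intCast_dvd (hd : Squarefree d) {θ : 𝓞 K} (hθ : (e.symm θ).im = 1 / 2) {c : ℤ}
    (hc : (c : 𝓞 K) ∣ θ) : IsUnit c := by
  obtain ⟨γ, rfl⟩ := hc
  obtain ⟨a, b, hγ⟩ := exists_symm_eq_mk_half e hd γ
  have him : (c : ℚ) * (b / 2) = 1 / 2 := by simpa [hγ] using hθ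
  have : (c * b : ℚ) = 1 := by linarith
  exact IsUnit.of_mul_eq_one b (by exact_mod_cast this)

theorem not_isPrincipal_of_four_mul_absNorm_le (hd : Squarefree d) (hneg : d < 0) {θ : 𝓞 K}
    (hθ : (e.symm θ).im = 1 / 2) {J : Ideal (𝓞 K)} (hJ : J ≠ ⊤) (hmem : θ ∈ J)
    (hle : 4 * (Ideal.absNorm J : ℤ) ≤ -d) : ¬J.IsPrincipal := by
  rintro ⟨β, rfl⟩
  rw [Ideal.submodule_span_eq] at hJ hmem hle
  rw [Ideal.absNorm_span_singleton] at hle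
  obtain ⟨c, rfl⟩ := exists_eq_intCast_of_four_mul_norm_le e hd hneg (z := β) (by lia)
  have hc : IsUnit c := isUnit_of_intCast_dvd e hd hθ (Ideal.mem_span_singleton.mp hmem)
  exact hJ (Ideal.span_singleton_eq_top.mpr (hc.map (Int.castRingHom (𝓞 K))))

theorem exists_im_eq_half_and_mul_sub_eq {x N : ℤ} (h : x ^ 2 - d = 4 * N) :
    ∃ θ : 𝓞 K, (e.symm θ).im = 1 / 2 ∧ θ * (x - θ) = N ∧ Algebra.norm ℤ θ = N := by
  let t : QuadraticAlgebra ℚ (d : ℚ) 0 := ⟨x / 2, 1 / 2⟩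
  have ht : t * (x - t) = N := by
    have hN : (x ^ 2 - d : ℚ) = 4 * N := by exact_mod_cast h
    ext
    · simp only [t, QuadraticAlgebra.re_mul, QuadraticAlgebra.re_sub, QuadraticAlgebra.im_sub,
        QuadraticAlgebra.re_intCast, QuadraticAlgebra.im_intCast]
      linear_combination hN / 4
    · simp only [t, QuadraticAlgebra.im_mul, QuadraticAlgebra.re_sub, QuadraticAlgebra.im_sub,
        QuadraticAlgebra.re_intCast, QuadraticAlgebra.im_intCast]
      ring
  have het : e t * (x - e t) = N := by simpa using congrArg e ht
  have hint : IsIntegral ℤ (e t) :=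
    ⟨Polynomial.X ^ 2 - Polynomial.C x * Polynomial.X + Polynomial.C N, by monicity!, by
      rw [← Polynomial.aeval_def]
      simp only [map_add, map_sub, map_mul, map_pow, Polynomial.aeval_X, eq_intCast,
        map_intCast]
      linear_combination -het⟩
  obtain ⟨θ, hθe⟩ : ∃ θ : 𝓞 K, (θ : K) = e t := ⟨⟨e t, hint⟩, rfl⟩
  have hθ : e.symm θ = t := by rw [hθe, e.symm_apply_apply]
  have hnorm : 4 * Algebra.norm ℤ θ = x ^ 2 - d * 1 ^ 2 :=
    four_mul_norm_eq_of_symm_eq_mk_half e (by rw [hθ, Int.cast_one])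
  refine ⟨θ, by rw [hθ], RingOfIntegers.ext ?_, by linarith⟩
  simpa [hθe] using het

theorem exists_span_singleton_eq_pow {x y : ℤ} {n : ℕ} (hn : n ≠ 0) (hxy : IsCoprime x y)
    (h : x ^ 2 - d = 4 * y ^ n) :
    ∃ (θ : 𝓞 K) (I : Ideal (𝓞 K)), (e.symm θ).im = 1 / 2 ∧ Ideal.span {θ} = I ^ n ∧
      Ideal.absNorm I = y.natAbs := by
  classical
  obtain ⟨θ, hθ, hmul, hnorm⟩ := exists_im_eq_half_and_mul_sub_eq e h
  rw [Int.cast_pow] at hmul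
  have hcop : IsCoprime θ (x - θ) := by
    refine isCoprime_of_isCoprime_add_mul ?_
    rw [add_sub_cancel, hmul]
    exact (hxy.map (Int.castRingHom (𝓞 K))).pow_right
  obtain ⟨I, hI⟩ : ∃ I : Ideal (𝓞 K), Ideal.span {θ} = I ^ n := by
    refine exists_eq_pow_of_mul_eq_pow_of_coprime (b := Ideal.span {x - θ})
      (c := Ideal.span {(y : 𝓞 K)}) ((Ideal.isCoprime_span_singleton_iff _ _).mpr hcop) ?_
    rw [Ideal.span_singleton_mul_span_singleton, hmul, Ideal.span_singleton_pow]
  refine ⟨θ, I, hθ, hI, Nat.pow_left_injective hn ?_⟩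
  change Ideal.absNorm I ^ n = y.natAbs ^ n
  rw [← map_pow, ← hI, Ideal.absNorm_span_singleton, hnorm, Int.natAbs_pow]

end QuadraticField

theorem stmt_5_general {n : ℕ} (hn : 1 < n) {D : ℕ} (hD : Squarefree D) {X Y : ℤ}
    (h : X ^ 2 - 4 * Y ^ n = -(D : ℤ)) (hY : 0 < Y)
    (hbig : ∀ m, m ∣ n → m < n → 4 * Y ^ m < (D : ℤ) + 1)
    {K : Type*} [Field K] [NumberField K] {α : K}
    (hα : α ^ 2 = -(D : K)) (hgen : Algebra.adjoin ℚ {α} = ⊤) :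
    ∃ c : ClassGroup (𝓞 K), orderOf c = n := by
  have hd : Squarefree (-(D : ℤ)) :=
    (Int.squarefree_natCast.mpr hD).squarefree_of_dvd (neg_dvd.mpr dvd_rfl)
  have hneg : -(D : ℤ) < 0 := neg_lt_zero.mpr (Nat.cast_pos.mpr hD.ne_zero.bot_lt)
  let e := quadraticAlgebraEquivOfSqEq (not_isSquare_intCast_of_neg hneg) (by simpa using hα) hgen
  obtain ⟨θ, I, hθ, hI, hIY⟩ := exists_span_singleton_eq_pow e (by lia)
    (isCoprime_of_squarefree_sq_sub_mul_pow hn hd h) (by linarith : X ^ 2 - -(D : ℤ) = 4 * Y ^ n)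
  have hY_ne_one : Y ≠ 1 := ne_one_of_squarefree_sq_sub_four_mul_pow hd h (by
    linarith [pow_one Y ▸ hbig 1 (one_dvd n) hn])
  have hI_ne_top : I ≠ ⊤ := by rw [Ne, ← Ideal.absNorm_eq_one_iff, hIY]; lia
  have hI_ne_bot : I ≠ ⊥ := by rw [Ne, ← Ideal.absNorm_eq_zero_iff, hIY]; lia
  refine ⟨ClassGroup.mk0 ⟨I, mem_nonZeroDivisors_of_ne_zero hI_ne_bot⟩,
    orderOf_classGroup_mk0_eq (by lia) ⟨θ, hI.symm⟩ fun m hmn hlt => ?_⟩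
  have hm : m ≠ 0 := ne_zero_of_dvd_ne_zero (by lia) hmn
  have hpow_ne_top : I ^ m ≠ ⊤ := by simp [Ideal.pow_eq_top_iff, hI_ne_top, hm]
  have hmem : θ ∈ I ^ m :=
    Ideal.pow_le_pow_right hlt.le (hI ▸ Ideal.mem_span_singleton_self θ)
  have habsNorm : (Ideal.absNorm (I ^ m) : ℤ) = Y ^ m := by
    rw [map_pow, hIY, Nat.cast_pow, Int.natAbs_of_nonneg hY.le]
  exact not_isPrincipal_of_four_mul_absNorm_le e hd hneg hθ hpow_ne_top hmem
    (by linarith [hbig m hmn hlt])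

theorem stmt_5 (p : ℕ) (hp : p.Prime) (hodd : Odd p) (D : ℕ) (hD : Squarefree D)
    (hDpos : 0 < D) (hD3 : D % 4 = 3) (X Y : ℤ)
    (h : X ^ 2 - 4 * Y ^ p = -(D : ℤ)) (hY : 0 < Y) (hbig : (D : ℤ) + 1 > 4 * Y)
    (K : Type) [Field K] [NumberField K] (α : K)
    (hα : α ^ 2 = -(D : K)) (hgen : Algebra.adjoin ℚ {α} = ⊤) :
    ∃ c : ClassGroup (NumberField.RingOfIntegers K), orderOf c = p :=
  stmt_5_general hp.one_lt hD h hY (fun m hmp hlt => by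
    simpa [((Nat.dvd_prime hp).mp hmp).resolve_right hlt.ne] using hbig) hα hgen
end

section
/- Let p ≥ 5 be a prime and let q > p be a prime number. Define f_q(X,Y) = 2(X^p + Y^p)q^p − (X − Y)²q^{2p} − (X^{p−1} + X^{p−2}Y + ⋯ + Y^{p−1})². Then there is no prime number ℓ such that ℓ² divides f_q(a,b) for every pair of positive integers (a,b). -/
open scoped BigOperators

/-- `g(a,b) = Σ_{i=0}^{p−1} a^{p−1−i} b^{i}`. -/
def gPoly (p : ℕ) (a b : ℤ) : ℤ := ∑ i ∈ Finset.range p, a ^ (p - 1 - i) * b ^ i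

/-- `f_q(a,b) = 2(a^p + b^p)q^p − (a−b)²q^{2p} − g(a,b)²`. -/
def fPoly (p : ℕ) (q a b : ℤ) : ℤ :=
  2 * (a ^ p + b ^ p) * q ^ p - (a - b) ^ 2 * q ^ (2 * p) - (gPoly p a b) ^ 2

/-!
For odd `p` an integer `n` dividing every value of `f_q` is a unit: `f_q(1, 1) = 4q^p - p²` is odd,
so `n` is odd; `f_q(1, 0) = -(q^p - 1)²`, so `n` is coprime to `q`; and `n` divides
`f_q(1, 1) - f_q(-1, -1) = 8q^p`. The arguments `0` and `-1` are allowed because `f_q` is a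
polynomial, so that its residue mod `n` depends only on those of its arguments.
-/

section Congruence

variable {n a a' b b' : ℤ}

theorem gPoly_modEq (p : ℕ) (ha : a ≡ a' [ZMOD n]) (hb : b ≡ b' [ZMOD n]) :
    gPoly p a b ≡ gPoly p a' b' [ZMOD n] :=
  Int.ModEq.sum fun i _ => (ha.pow (p - 1 - i)).mul (hb.pow i)

theorem fPoly_modEq (p : ℕ) (q : ℤ) (ha : a ≡ a' [ZMOD n]) (hb : b ≡ b' [ZMOD n]) :
    fPoly p q a b ≡ fPoly p q a' b' [ZMOD n] :=
  (((((ha.pow p).add (hb.pow p)).mul_left 2).mul_right (q ^ p)).sub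
    (((ha.sub hb).pow 2).mul_right (q ^ (2 * p)))).sub ((gPoly_modEq p ha hb).pow 2)

theorem exists_pos_modEq (hn : n ≠ 0) (a : ℤ) : ∃ c : ℤ, 0 < c ∧ c ≡ a [ZMOD n] := by
  refine ⟨a % n + |n|, add_pos_of_nonneg_of_pos (Int.emod_nonneg a hn) (abs_pos.2 hn), ?_⟩
  have h_abs : |n| ≡ 0 [ZMOD n] := Int.modEq_zero_iff_dvd.2 (self_dvd_abs n)
  simpa only [add_zero] using (Int.mod_modEq a n).add h_abs

theorem dvd_fPoly_of_forall_pos {p : ℕ} {q : ℤ} (hn : n ≠ 0)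
    (h : ∀ a b : ℤ, 0 < a → 0 < b → n ∣ fPoly p q a b) (a b : ℤ) : n ∣ fPoly p q a b := by
  obtain ⟨c, hc_pos, hca⟩ := exists_pos_modEq hn a
  obtain ⟨d, hd_pos, hdb⟩ := exists_pos_modEq hn b
  exact (fPoly_modEq p q hca hdb).dvd_iff.1 (h c d hc_pos hd_pos)

end Congruence

theorem gPoly_self (p : ℕ) (a : ℤ) : gPoly p a a = p * a ^ (p - 1) := by
  simpa only [gPoly, mul_comm] using geom_sum₂_self a p

theorem gPoly_zero_right {p : ℕ} (hp : p ≠ 0) (a : ℤ) : gPoly p a 0 = a ^ (p - 1) := by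
  simp [gPoly, zero_pow_eq, hp]

theorem fPoly_self (p : ℕ) (q a : ℤ) :
    fPoly p q a a = 4 * a ^ p * q ^ p - (p * a ^ (p - 1)) ^ 2 := by
  rw [fPoly, gPoly_self]
  ring

theorem fPoly_one_zero {p : ℕ} (hp : p ≠ 0) (q : ℤ) : fPoly p q 1 0 = -(q ^ p - 1) ^ 2 := by
  rw [fPoly, gPoly_zero_right hp, zero_pow hp]
  ring

theorem isCoprime_of_dvd_fPoly_one_zero {p : ℕ} {n q : ℤ} (hp : p ≠ 0) (h : n ∣ fPoly p q 1 0) :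
    IsCoprime n q := by
  have h_coprime : IsCoprime (q ^ p - 1) (q ^ p) := ⟨-1, 1, by ring⟩
  rw [fPoly_one_zero hp, dvd_neg] at h
  exact (h_coprime.pow_left.of_isCoprime_of_dvd_left h).of_isCoprime_of_dvd_right
    (dvd_pow_self q hp)

theorem odd_fPoly_one_one {p : ℕ} (hp : Odd p) (q : ℤ) : Odd (fPoly p q 1 1) := by
  have h_even : Even (4 * 1 ^ p * q ^ p) := ((by decide : Even (4 : ℤ)).mul_right _).mul_right _
  rw [fPoly_self, one_pow (p - 1), mul_one]
  exact h_even.sub_odd ((Int.odd_coe_nat p).2 hp).pow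

theorem fPoly_self_sub_fPoly_neg_self {p : ℕ} (hp : Odd p) (q a : ℤ) :
    fPoly p q a a - fPoly p q (-a) (-a) = 8 * a ^ p * q ^ p := by
  rw [fPoly_self, fPoly_self, hp.neg_pow, (Nat.Odd.sub_odd hp odd_one).neg_pow]
  ring

theorem stmt_7_general {p : ℕ} (hp : Odd p) {q n : ℤ}
    (h : ∀ a b : ℤ, 0 < a → 0 < b → n ∣ fPoly p q a b) : IsUnit n := by
  have h_coprime_two : IsCoprime n 2 :=
    (Int.isCoprime_two_right.2 (odd_fPoly_one_one hp q)).of_isCoprime_of_dvd_left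
      (h 1 1 one_pos one_pos)
  have hn_zero : n ≠ 0 := by
    rintro rfl
    exact absurd (Int.isCoprime_two_right.1 h_coprime_two) (by decide)
  have h_all : ∀ a b : ℤ, n ∣ fPoly p q a b := dvd_fPoly_of_forall_pos hn_zero h
  have h_coprime_q : IsCoprime n q := isCoprime_of_dvd_fPoly_one_zero hp.pos.ne' (h_all 1 0)
  have h_dvd : n ∣ 2 ^ 3 * q ^ p := by
    simpa [fPoly_self_sub_fPoly_neg_self hp] using dvd_sub (h_all 1 1) (h_all (-1) (-1))
  exact (h_coprime_two.pow_right.mul_right h_coprime_q.pow_right).isUnit_of_dvd' dvd_rfl h_dvd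

theorem stmt_7 (p q : ℕ) (hp : p.Prime) (hp5 : 5 ≤ p) (hq : q.Prime) (hqp : p < q) :
    ¬ ∃ ℓ : ℕ, ℓ.Prime ∧ ∀ a b : ℤ, 0 < a → 0 < b →
      (ℓ : ℤ) ^ 2 ∣ fPoly p (q : ℤ) a b := by
  rintro ⟨ℓ, hℓ, h⟩
  exact (Nat.prime_iff_prime_int.1 hℓ).not_isUnit <| (isUnit_pow_iff two_ne_zero).1 <|
    stmt_7_general (hp.odd_of_ne_two (by lia)) h
end
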